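/- Suppose in addition that λ > 0, that w is nonconstant, and that w is nondecreasing on [0,1] (i.e. w'(x) ≥ 0 for all x). Then w'(x) > 0 for every x ∈ (0,1); in particular w is strictly increasing on (0,1). -/

import Mathlib

/-- `u` is continuously differentiable on `[0,1]` with derivative `u'`. -/
def IsC1On01 (u u' : ℝ → ℝ) : Prop :=
  (∀ x ∈ Set.Icc (0:ℝ) 1, HasDerivAt u (u' x) x) ∧ ContinuousOn u' (Set.Icc (0:ℝ) 1)

/-!
The weak equation says that the flux `p = w' σ² μ` satisfies `p(x) = -2λ ∫₀ˣ w μ`, and that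
`∫₀¹ w μ = 0`. If `w'` vanished at an interior point `c`, so would `p`, hence `w μ` would have
integral zero over both `[0,c]` and `[c,1]`. But `w` is monotone, so it has constant sign on one of
these intervals; there it vanishes identically, so `w(c) = 0`, and then `w` has constant sign on the
other one as well. Thus `w = 0`, contradicting nonconstancy.
-/

open Set intervalIntegral

section ZeroIntegral

variable {a b : ℝ} {f μ : ℝ → ℝ}

theorem eqOn_zero_of_integral_eq_zero (hab : a < b) (hfc : ContinuousOn f (Icc a b))
    (hf : ∀ x ∈ Icc a b, 0 ≤ f x) (hint : ∫ x in a..b, f x = 0) : EqOn f 0 (Icc a b) := by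
  intro x hx
  by_contra hne
  exact (integral_pos hab hfc (fun y hy => hf y (Ioc_subset_Icc_self hy))
    ⟨x, hx, (hf x hx).lt_of_ne' hne⟩).ne' hint

theorem eqOn_zero_of_integral_mul_eq_zero (hab : a < b) (hfc : ContinuousOn f (Icc a b))
    (hμc : ContinuousOn μ (Icc a b)) (hf : ∀ x ∈ Icc a b, 0 ≤ f x) (hμ : ∀ x ∈ Ioo a b, 0 < μ x)
    (hint : ∫ x in a..b, f x * μ x = 0) : EqOn f 0 (Icc a b) := by
  have hμ_nonneg : ∀ x ∈ Icc a b, 0 ≤ μ x := by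
    rw [← closure_Ioo hab.ne] at hμc ⊢
    exact fun x hx => le_on_closure (fun y hy => (hμ y hy).le) continuousOn_const hμc hx
  have hfμ : EqOn (fun x => f x * μ x) 0 (Icc a b) :=
    eqOn_zero_of_integral_eq_zero hab (hfc.mul hμc)
      (fun x hx => mul_nonneg (hf x hx) (hμ_nonneg x hx)) hint
  have hf_Ioo : EqOn f 0 (Ioo a b) := fun x hx =>
    (mul_eq_zero.1 (hfμ (Ioo_subset_Icc_self hx))).resolve_right (hμ x hx).ne'
  exact hf_Ioo.of_subset_closure hfc continuousOn_const Ioo_subset_Icc_self (closure_Ioo hab.ne).ge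

theorem eqOn_zero_of_monotoneOn_of_integral_mul_eq_zero {c : ℝ} (hc : c ∈ Ioo a b)
    (hf : MonotoneOn f (Icc a b)) (hfc : ContinuousOn f (Icc a b))
    (hμc : ContinuousOn μ (Icc a b)) (hμ : ∀ x ∈ Ioo a b, 0 < μ x)
    (hleft : ∫ x in a..c, f x * μ x = 0) (hright : ∫ x in c..b, f x * μ x = 0) :
    EqOn f 0 (Icc a b) := by
  have hcI : c ∈ Icc a b := Ioo_subset_Icc_self hc
  have hsubL : Icc a c ⊆ Icc a b := Icc_subset_Icc_right hcI.2
  have hsubR : Icc c b ⊆ Icc a b := Icc_subset_Icc_left hcI.1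
  have zero_left (hc_nonpos : f c ≤ 0) : EqOn f 0 (Icc a c) := by
    have hneg : EqOn (fun x => -f x) 0 (Icc a c) :=
      eqOn_zero_of_integral_mul_eq_zero hc.1 (hfc.mono hsubL).neg (hμc.mono hsubL)
        (fun x hx => neg_nonneg.2 ((hf (hsubL hx) hcI hx.2).trans hc_nonpos))
        (fun x hx => hμ x (Ioo_subset_Ioo_right hcI.2 hx))
        (by simp only [neg_mul, integral_neg, hleft, neg_zero])
    exact fun x hx => neg_eq_zero.1 (hneg hx)
  have zero_right (hc_nonneg : 0 ≤ f c) : EqOn f 0 (Icc c b) :=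
    eqOn_zero_of_integral_mul_eq_zero hc.2 (hfc.mono hsubR) (hμc.mono hsubR)
      (fun x hx => hc_nonneg.trans (hf hcI (hsubR hx) hx.1))
      (fun x hx => hμ x (Ioo_subset_Ioo_left hcI.1 hx)) hright
  have hc_zero : f c = 0 := (le_total (f c) 0).elim
    (fun h => zero_left h (right_mem_Icc.2 hcI.1)) (fun h => zero_right h (left_mem_Icc.2 hcI.2))
  rw [← Icc_union_Icc_eq_Icc hcI.1 hcI.2]
  exact (zero_left hc_zero.le).union (zero_right hc_zero.ge)

end ZeroIntegral

/-- The weak form of the boundary value problem `-p' = m` on `[a,b]`, `p(a) = p(b) = 0`. The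
boundary conditions are encoded by leaving the values of the test functions at `a` and `b` free. -/
def IsWeakNeumannFlux (a b : ℝ) (p m : ℝ → ℝ) : Prop :=
  ∀ v : ℝ → ℝ, ContDiff ℝ 1 v → ∫ x in a..b, p x * deriv v x = ∫ x in a..b, m x * v x

namespace IsWeakNeumannFlux

variable {a b : ℝ} {p m : ℝ → ℝ}

theorem integral_eq_zero (h : IsWeakNeumannFlux a b p m) : ∫ x in a..b, m x = 0 := by
  simpa using (h (fun _ => 1) contDiff_const).symm

theorem integral_mul_eq_neg_integral_primitive_mul (h : IsWeakNeumannFlux a b p m)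
    (hm : ContinuousOn m (uIcc a b)) {g : ℝ → ℝ} (hg : Continuous g) :
    ∫ x in a..b, p x * g x = -∫ x in a..b, (∫ t in a..x, m t) * g x := by
  have hV (x : ℝ) : HasDerivAt (fun y => ∫ t in a..y, g t) (g x) x :=
    (hg.integral_hasStrictDerivAt a x).hasDerivAt
  have hV_deriv : deriv (fun y => ∫ t in a..y, g t) = g := funext fun x => (hV x).deriv
  have hV_contDiff : ContDiff ℝ 1 fun y => ∫ t in a..y, g t :=
    contDiff_one_iff_deriv.2 ⟨fun x => (hV x).differentiableAt, by rwa [hV_deriv]⟩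
  have hM_cont : ContinuousOn (fun x => ∫ t in a..x, m t) (uIcc a b) :=
    continuousOn_primitive_interval hm.integrableOn_uIcc
  have hM (x : ℝ) (hx : x ∈ Ioo (min a b) (max a b)) :
      HasDerivAt (fun y => ∫ t in a..y, m t) (m x) x :=
    integral_hasDerivAt_right
      (hm.mono (uIcc_subset_uIcc_left (Ioo_subset_Icc_self hx))).intervalIntegrable
      ((hm.mono Ioo_subset_Icc_self).stronglyMeasurableAtFilter isOpen_Ioo x hx)
      (hm.continuousAt (Icc_mem_nhds hx.1 hx.2))
  have hparts := integral_mul_deriv_eq_deriv_mul_of_hasDerivAt hM_cont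
    hV_contDiff.continuous.continuousOn hM (fun x _ => hV x) hm.intervalIntegrable
    (hg.intervalIntegrable a b)
  have hweak := h _ hV_contDiff
  rw [hV_deriv] at hweak
  rw [hparts, h.integral_eq_zero, hweak]
  simp

theorem eqOn_neg_integral (h : IsWeakNeumannFlux a b p m) (hab : a < b)
    (hp : ContinuousOn p (Icc a b)) (hm : ContinuousOn m (Icc a b)) :
    EqOn p (fun x => -∫ t in a..x, m t) (Icc a b) := by
  rw [← uIcc_of_le hab.le] at hm
  set M : ℝ → ℝ := fun x => ∫ t in a..x, m t
  have hM : ContinuousOn M (Icc a b) :=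
    uIcc_of_le hab.le ▸ continuousOn_primitive_interval hm.integrableOn_uIcc
  -- Testing against a primitive of `p + M` yields `∫ (p + M)² = 0`; the extension beyond `[a,b]`
  -- makes that primitive a `C¹` function on all of `ℝ`.
  set g : ℝ → ℝ := IccExtend hab.le ((Icc a b).domRestrict (p + M))
  have hg : Continuous g := (hp.add hM).domRestrict.Icc_extend'
  have hg_eq (x : ℝ) (hx : x ∈ Icc a b) : g x = p x + M x := IccExtend_of_mem hab.le _ hx
  have hg_sq : ∫ x in a..b, g x ^ 2 = 0 := calc
    ∫ x in a..b, g x ^ 2 = ∫ x in a..b, (p x * g x + M x * g x) :=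
      integral_congr fun x hx => by
        simp only [pow_two, ← add_mul, ← hg_eq x (uIcc_of_le hab.le ▸ hx)]
    _ = (∫ x in a..b, p x * g x) + ∫ x in a..b, M x * g x :=
      integral_add ((hp.mul hg.continuousOn).intervalIntegrable_of_Icc hab.le)
        ((hM.mul hg.continuousOn).intervalIntegrable_of_Icc hab.le)
    _ = 0 := by rw [h.integral_mul_eq_neg_integral_primitive_mul hm hg, neg_add_cancel]
  intro x hx
  have hgx : g x = 0 := (pow_eq_zero_iff two_ne_zero).1 <|
    eqOn_zero_of_integral_eq_zero hab (hg.pow 2).continuousOn (fun y _ => sq_nonneg (g y)) hg_sq hx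
  exact eq_neg_of_add_eq_zero_left ((hg_eq x hx).symm.trans hgx)

theorem eqOn_zero_of_flux_eq_zero {κ c : ℝ} {μ w : ℝ → ℝ}
    (h : IsWeakNeumannFlux a b p fun x => κ * (w x * μ x)) (hκ : κ ≠ 0)
    (hp : ContinuousOn p (Icc a b)) (hμc : ContinuousOn μ (Icc a b)) (hμ : ∀ x ∈ Ioo a b, 0 < μ x)
    (hwc : ContinuousOn w (Icc a b)) (hw : MonotoneOn w (Icc a b)) (hc : c ∈ Ioo a b)
    (hpc : p c = 0) : EqOn w 0 (Icc a b) := by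
  have hab : a < b := hc.1.trans hc.2
  have hcI : c ∈ Icc a b := Ioo_subset_Icc_self hc
  have hm : ContinuousOn (fun x => w x * μ x) (Icc a b) := hwc.mul hμc
  have hleft : ∫ x in a..c, w x * μ x = 0 := by
    simpa [hpc, hκ] using h.eqOn_neg_integral hab hp (hm.const_mul κ) hcI
  have htotal : ∫ x in a..b, w x * μ x = 0 := by simpa [hκ] using h.integral_eq_zero
  have hright : ∫ x in c..b, w x * μ x = 0 := by
    rw [← integral_interval_sub_left (hm.intervalIntegrable_of_Icc hab.le)
      ((hm.mono (Icc_subset_Icc_right hcI.2)).intervalIntegrable_of_Icc hcI.1), htotal, hleft,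
      sub_zero]
  exact eqOn_zero_of_monotoneOn_of_integral_mul_eq_zero hc hw hwc hμc hμ hleft hright

end IsWeakNeumannFlux

theorem isC1On01_of_contDiff {v : ℝ → ℝ} (hv : ContDiff ℝ 1 v) : IsC1On01 v (deriv v) :=
  ⟨fun x _ => (hv.differentiable one_ne_zero x).hasDerivAt, hv.continuous_deriv_one.continuousOn⟩

theorem IsC1On01.continuousOn {u u' : ℝ → ℝ} (hu : IsC1On01 u u') : ContinuousOn u (Icc 0 1) :=
  HasDerivAt.continuousOn hu.1

theorem statement3_general {a b κ : ℝ} {ρ μ w w' : ℝ → ℝ} (hκ : κ ≠ 0)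
    (hμc : ContinuousOn μ (Icc a b)) (hμ : ∀ x ∈ Ioo a b, 0 < μ x)
    (hwc : ContinuousOn w (Icc a b)) (hw : ∀ x ∈ Ioo a b, HasDerivAt w (w' x) x)
    (hflux : ContinuousOn (fun x => w' x * ρ x) (Icc a b))
    (heig : ∀ v : ℝ → ℝ, ContDiff ℝ 1 v →
      ∫ x in a..b, w' x * deriv v x * ρ x = κ * ∫ x in a..b, w x * v x * μ x)
    (hnonconst : ∃ x ∈ Icc a b, ∃ y ∈ Icc a b, w x ≠ w y)
    (hmono : ∀ x ∈ Ioo a b, 0 ≤ w' x) :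
    (∀ x ∈ Ioo a b, 0 < w' x) ∧ StrictMonoOn w (Icc a b) := by
  have hw_interior : ∀ x ∈ interior (Icc a b),
      HasDerivWithinAt w (w' x) (interior (Icc a b)) x := by
    rw [interior_Icc]
    exact fun x hx => (hw x hx).hasDerivWithinAt
  have hw_mono : MonotoneOn w (Icc a b) :=
    monotoneOn_of_hasDerivWithinAt_nonneg (convex_Icc a b) hwc hw_interior (by rwa [interior_Icc])
  have hweak : IsWeakNeumannFlux a b (fun x => w' x * ρ x) (fun x => κ * (w x * μ x)) := by
    intro v hv
    simpa only [mul_right_comm _ (deriv v _), mul_right_comm _ (v _), mul_assoc κ,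
      integral_const_mul] using heig v hv
  have hpos : ∀ c ∈ Ioo a b, 0 < w' c := by
    refine fun c hc => (hmono c hc).lt_of_ne' fun hw'c => ?_
    have hw_zero : EqOn w 0 (Icc a b) :=
      hweak.eqOn_zero_of_flux_eq_zero hκ hflux hμc hμ hwc hw_mono hc (mul_eq_zero_of_left hw'c _)
    obtain ⟨x, hx, y, hy, hxy⟩ := hnonconst
    exact hxy ((hw_zero hx).trans (hw_zero hy).symm)
  exact ⟨hpos, strictMonoOn_of_hasDerivWithinAt_pos (convex_Icc a b) hwc hw_interior
    (by rwa [interior_Icc])⟩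

/-- If `(λ, w)` solves the weak Neumann eigenproblem for `(σ, μ)` with `λ > 0`, `w`
nonconstant and nondecreasing, then `w' > 0` on `(0,1)`; in particular `w` is strictly
increasing on `(0,1)`. -/
theorem statement3 (σ μ w w' : ℝ → ℝ) (lam : ℝ) (hlam : lam ≠ 0)
    (hσc : ContinuousOn σ (Set.Icc (0:ℝ) 1)) (hμc : ContinuousOn μ (Set.Icc (0:ℝ) 1))
    (hσpos : ∀ x ∈ Set.Icc (0:ℝ) 1, 0 < σ x) (hμpos : ∀ x ∈ Set.Icc (0:ℝ) 1, 0 < μ x)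
    (hw : IsC1On01 w w')
    (heig : ∀ v v' : ℝ → ℝ, IsC1On01 v v' →
      ∫ x in (0:ℝ)..1, w' x * v' x * (σ x)^2 * μ x
        = 2 * lam * ∫ x in (0:ℝ)..1, w x * v x * μ x)
    (hlampos : 0 < lam)
    (hnonconst : ∃ x ∈ Set.Icc (0:ℝ) 1, ∃ y ∈ Set.Icc (0:ℝ) 1, w x ≠ w y)
    (hmono : ∀ x ∈ Set.Icc (0:ℝ) 1, 0 ≤ w' x) :
    (∀ x ∈ Set.Ioo (0:ℝ) 1, 0 < w' x) ∧ StrictMonoOn w (Set.Ioo (0:ℝ) 1) :=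
  (statement3_general (ρ := fun x => σ x ^ 2 * μ x) (mul_ne_zero two_ne_zero hlam) hμc
    (fun x hx => hμpos x (Ioo_subset_Icc_self hx)) hw.continuousOn
    (fun x hx => hw.1 x (Ioo_subset_Icc_self hx)) (hw.2.mul ((hσc.pow 2).mul hμc))
    (fun v hv => by simpa only [mul_assoc] using heig v _ (isC1On01_of_contDiff hv))
    hnonconst (fun x hx => hmono x (Ioo_subset_Icc_self hx))).imp_right
    (·.mono Ioo_subset_Icc_self)
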